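/- Each of the ten maps Z_{0,1}, Z_{0,2}, Z_{1,1}, Z_{1,2}, Z_{2,1}, Z_{2,2}, Z_{−1,1}, Z_{−1,2}, Z_{−2,1}, Z_{−2,2} is a bounded smooth map from ℝ² to ℝ³ that solves the linearized H-system at the degree-2 bubble: L_W[Z] = ΔZ − 2 W_x ∧ Z_y − 2 Z_x ∧ W_y = 0 at every point of ℝ². -/

import Mathlib

noncomputable section

/-- `ℝ³` with the Euclidean norm. -/
abbrev R3 : Type := EuclideanSpace ℝ (Fin 3)

/-- The vector in `ℝ³` with the given coordinates. -/
def e3 (a b c : ℝ) : R3 := (WithLp.equiv 2 (Fin 3 → ℝ)).symm ![a, b, c]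

/-- The cross product on `ℝ³`. -/
def cross (a b : R3) : R3 :=
  e3 (a 1 * b 2 - a 2 * b 1) (a 2 * b 0 - a 0 * b 2) (a 0 * b 1 - a 1 * b 0)

/-- Partial derivative in the `x` direction, identifying `ℝ²` with `ℂ` via `z = x + iy`. -/
def pdx (u : ℂ → R3) (z : ℂ) : R3 := fderiv ℝ u z 1

/-- Partial derivative in the `y` direction. -/
def pdy (u : ℂ → R3) (z : ℂ) : R3 := fderiv ℝ u z Complex.I

/-- Componentwise Laplacian. -/
def lap (u : ℂ → R3) (z : ℂ) : R3 := pdx (pdx u) z + pdy (pdy u) z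

/-- The degree-2 H-bubble `W = π(z²)`. -/
def W : ℂ → R3 := fun z =>
  e3 (2 * (z.re ^ 2 - z.im ^ 2) / ((z.re ^ 2 + z.im ^ 2) ^ 2 + 1))
    (4 * z.re * z.im / ((z.re ^ 2 + z.im ^ 2) ^ 2 + 1))
    (((z.re ^ 2 + z.im ^ 2) ^ 2 - 1) / ((z.re ^ 2 + z.im ^ 2) ^ 2 + 1))

/-- The linearized H-system operator at the degree-2 bubble `W`:
`L_W[v] = Δv − 2 Wₓ ∧ v_y − 2 vₓ ∧ W_y`. -/
def LW (v : ℂ → R3) (z : ℂ) : R3 :=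
  lap v z - (2 : ℝ) • cross (pdx W z) (pdy v z) - (2 : ℝ) • cross (pdx v z) (pdy W z)

/-- `v` is a bounded smooth global solution of the linearized H-system at `W`. -/
def IsBoundedSmoothKernel (v : ℂ → R3) : Prop :=
  (∃ C : ℝ, ∀ z, ‖v z‖ ≤ C) ∧ ContDiff ℝ (⊤ : ℕ∞) v ∧ ∀ z, LW v z = 0

def Z01 : ℂ → R3 := fun z =>
  let x := z.re; let y := z.im; let D := (x ^ 2 + y ^ 2) ^ 2 + 1
  e3 (4 * (x - y) * (x + y) * (x ^ 2 + y ^ 2 - 1) * (x ^ 2 + y ^ 2 + 1) / D ^ 2)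
    (8 * x * y * ((x ^ 2 + y ^ 2) ^ 2 - 1) / D ^ 2)
    (-(8 * (x ^ 2 + y ^ 2) ^ 2) / D ^ 2)

def Z02 : ℂ → R3 := fun z =>
  let x := z.re; let y := z.im; let D := (x ^ 2 + y ^ 2) ^ 2 + 1
  e3 (-(4 * x * y) / D) (2 * (x - y) * (x + y) / D) 0

def Z11 : ℂ → R3 := fun z =>
  let x := z.re; let y := z.im; let D := (x ^ 2 + y ^ 2) ^ 2 + 1
  e3 (4 * x * (x ^ 4 - 2 * x ^ 2 * y ^ 2 - 3 * y ^ 4 - 1) / D ^ 2)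
    (-(4 * y * (-(3 * x ^ 4) - 2 * x ^ 2 * y ^ 2 + y ^ 4 + 1)) / D ^ 2)
    (-(8 * x * (x ^ 2 + y ^ 2)) / D ^ 2)

def Z12 : ℂ → R3 := fun z =>
  let x := z.re; let y := z.im; let D := (x ^ 2 + y ^ 2) ^ 2 + 1
  e3 (4 * y * (3 * x ^ 4 + 2 * x ^ 2 * y ^ 2 - y ^ 4 + 1) / D ^ 2)
    (-(4 * x * (x ^ 4 - 2 * x ^ 2 * y ^ 2 - 3 * y ^ 4 + 1)) / D ^ 2)
    (-(8 * y * (x ^ 2 + y ^ 2)) / D ^ 2)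

def Z21 : ℂ → R3 := fun z =>
  let x := z.re; let y := z.im; let D := (x ^ 2 + y ^ 2) ^ 2 + 1
  e3 (-(2 * (x ^ 4 - 6 * x ^ 2 * y ^ 2 + y ^ 4 - 1)) / D ^ 2)
    (-(8 * x * y * (x - y) * (x + y)) / D ^ 2)
    (4 * (x - y) * (x + y) / D ^ 2)

def Z22 : ℂ → R3 := fun z =>
  let x := z.re; let y := z.im; let D := (x ^ 2 + y ^ 2) ^ 2 + 1
  e3 (-(8 * x * y * (x - y) * (x + y)) / D ^ 2)
    (2 * (x ^ 4 - 6 * x ^ 2 * y ^ 2 + y ^ 4 + 1) / D ^ 2)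
    (8 * x * y / D ^ 2)

def Zm11 : ℂ → R3 := fun z =>
  let x := z.re; let y := z.im; let D := (x ^ 2 + y ^ 2) ^ 2 + 1
  e3 (-(4 * x * (3 * (x ^ 4 + 1) * y ^ 2 + 3 * x ^ 2 * y ^ 4 + x ^ 2 * (x ^ 4 - 1) + y ^ 6)) / D ^ 2)
    (-(4 * y * (x ^ 6 + 3 * x ^ 4 * y ^ 2 + 3 * x ^ 2 * (y ^ 4 - 1) + y ^ 6 + y ^ 2)) / D ^ 2)
    (8 * x * (x ^ 2 + y ^ 2) ^ 2 / D ^ 2)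

def Zm12 : ℂ → R3 := fun z =>
  let x := z.re; let y := z.im; let D := (x ^ 2 + y ^ 2) ^ 2 + 1
  e3 (4 * y * (x ^ 6 + 3 * x ^ 4 * y ^ 2 + 3 * x ^ 2 * (y ^ 4 + 1) + y ^ 6 - y ^ 2) / D ^ 2)
    (-(4 * x * (x ^ 6 + 3 * x ^ 4 * y ^ 2 + 3 * x ^ 2 * y ^ 4 + x ^ 2 + y ^ 6 - 3 * y ^ 2)) / D ^ 2)
    (8 * y * (x ^ 2 + y ^ 2) ^ 2 / D ^ 2)

def Zm21 : ℂ → R3 := fun z =>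
  let x := z.re; let y := z.im; let D := (x ^ 2 + y ^ 2) ^ 2 + 1
  e3 0 (-(((x ^ 2 + y ^ 2) ^ 2 - 1)) / D) (4 * x * y / D)

def Zm22 : ℂ → R3 := fun z =>
  let x := z.re; let y := z.im; let D := (x ^ 2 + y ^ 2) ^ 2 + 1
  e3 (-(((x ^ 2 + y ^ 2) ^ 2 - 1)) / D) 0 (2 * (x - y) * (x + y) / D)

/-!
The H-system `Δu = 2 uₓ ∧ u_y` is conformally invariant: if `u` solves it and `f` is entire, then so
does `u ∘ f`. Moving `f` along an entire function `g` therefore gives a solution `Du(f)[g]` of the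
linearization at `u ∘ f`. The bubble is `W = π(z²)` with `π` the inverse stereographic projection,
and the ten maps are the variations `Dπ(z²)[p(z)]` for polynomials `p` of degree at most four.
They are bounded because `‖Dπ(w)[h]‖ = 2 ‖h‖ / (1 + ‖w‖²)`, so at `w = z²` the denominator has
degree four.
-/

open Complex Polynomial

/-! ### The H-system and its linearization -/

/-- The cross product of `ℝ³` as a continuous bilinear map. -/
def crossL : R3 →L[ℝ] R3 →L[ℝ] R3 :=
  (LinearMap.mk₂ ℝ cross
    (fun a b c => by ext i; fin_cases i <;> simp [cross, e3] <;> ring)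
    (fun r a b => by ext i; fin_cases i <;> simp [cross, e3] <;> ring)
    (fun a b c => by ext i; fin_cases i <;> simp [cross, e3] <;> ring)
    (fun r a b => by ext i; fin_cases i <;> simp [cross, e3] <;> ring)).toContinuousBilinearMap

theorem crossL_apply (a b : R3) : crossL a b = cross a b := rfl

theorem crossL_self (a : R3) : crossL a a = 0 := by
  ext i; fin_cases i <;> simp [crossL_apply, cross, e3] <;> ring

theorem crossL_anticomm (a b : R3) : crossL b a = -crossL a b := by
  ext i; fin_cases i <;> simp [crossL_apply, cross, e3] <;> ring

/-- `u` solves the H-system `Δu = 2 uₓ ∧ u_y`. -/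
def SolvesHSystem (u : ℂ → R3) : Prop :=
  ∀ z, lap u z = (2 : ℝ) • cross (pdx u z) (pdy u z)

/-- The linearization at `u` of the H-system, `L_u[v] = Δv − 2 uₓ ∧ v_y − 2 vₓ ∧ u_y`. -/
def linearizedHSystem (u v : ℂ → R3) (z : ℂ) : R3 :=
  lap v z - (2 : ℝ) • cross (pdx u z) (pdy v z) - (2 : ℝ) • cross (pdx v z) (pdy u z)

/-- The infinitesimal variation `d/dt P(f + t g)` at `t = 0` of `P ∘ f`, moving the inner map `f`
along `g`. -/
def variation {F : Type*} [NormedAddCommGroup F] [NormedSpace ℝ F] (P : ℂ → F) (f g : ℂ → ℂ)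
    (z : ℂ) : F :=
  fderiv ℝ P (f z) (g z)

theorem clm_apply_eq_re_im {F : Type*} [NormedAddCommGroup F] [NormedSpace ℝ F]
    (L : ℂ →L[ℝ] F) (a : ℂ) : L a = a.re • L 1 + a.im • L I := by
  conv_lhs => rw [← re_add_im a]
  rw [← map_smul, ← map_smul, ← map_add, real_smul, real_smul, mul_one]

theorem cross_apply_mul_I (L : ℂ →L[ℝ] R3) (a b : ℂ) :
    cross (L a) (L (I * b)) = inner ℝ a b • cross (L 1) (L I) := by
  rw [clm_apply_eq_re_im L a, clm_apply_eq_re_im L (I * b)]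
  simp only [← crossL_apply, map_add, map_smul, add_apply, smul_apply, crossL_self,
    crossL_anticomm (L 1) (L I), Complex.inner, mul_re, mul_im, conj_re, conj_im, I_re, I_im]
  module

theorem symm_bilin_add_mul_I {F : Type*} [NormedAddCommGroup F] [NormedSpace ℝ F]
    {S : ℂ →L[ℝ] ℂ →L[ℝ] F} (hS : ∀ a b, S a b = S b a) (a b : ℂ) :
    S a b + S (I * a) (I * b) = inner ℝ a b • (S 1 1 + S I I) := by
  have expand (c d : ℂ) : S c d =
      (c.re * d.re) • S 1 1 + (c.re * d.im + c.im * d.re) • S 1 I + (c.im * d.im) • S I I := by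
    rw [clm_apply_eq_re_im S c]
    simp only [add_apply, smul_apply]
    rw [clm_apply_eq_re_im (S 1) d, clm_apply_eq_re_im (S I) d, hS I 1]
    module
  rw [expand a b, expand (I * a) (I * b)]
  simp only [Complex.inner, mul_re, mul_im, conj_re, conj_im, I_re, I_im]
  module

section Variation

variable {F : Type*} [NormedAddCommGroup F] [NormedSpace ℝ F] {P : ℂ → F} {u : ℂ → R3}
  {f g k : ℂ → ℂ}

theorem differentiable_fderiv (hP : ContDiff ℝ 2 P) : Differentiable ℝ (fderiv ℝ P) :=
  (hP.fderiv_right (m := 1) le_rfl).differentiable one_ne_zero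

theorem fderiv_fderiv_apply_const (hP : ContDiff ℝ 2 P) (w h k : ℂ) :
    fderiv ℝ (fun z => fderiv ℝ P z h) w k = fderiv ℝ (fderiv ℝ P) w k h := by
  rw [fderiv_clm_apply (differentiable_fderiv hP w) (differentiableAt_const h)]
  simp

theorem lap_eq_fderiv_fderiv (hu : ContDiff ℝ 2 u) (w : ℂ) :
    lap u w = fderiv ℝ (fderiv ℝ u) w 1 1 + fderiv ℝ (fderiv ℝ u) w I I := by
  rw [← fderiv_fderiv_apply_const hu, ← fderiv_fderiv_apply_const hu]
  rfl

theorem fderiv_fderiv_comm (hP : ContDiff ℝ 2 P) (w a b : ℂ) :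
    fderiv ℝ (fderiv ℝ P) w a b = fderiv ℝ (fderiv ℝ P) w b a :=
  hP.contDiffAt.isSymmSndFDerivAt (by simp) a b

/-- Conformal invariance of the H-system, polarized. -/
theorem SolvesHSystem.fderiv_fderiv_add_mul_I (h : SolvesHSystem u) (hu : ContDiff ℝ 2 u)
    (w a b : ℂ) :
    fderiv ℝ (fderiv ℝ u) w a b + fderiv ℝ (fderiv ℝ u) w (I * a) (I * b) =
      (2 : ℝ) • cross (fderiv ℝ u w a) (fderiv ℝ u w (I * b)) := by
  rw [symm_bilin_add_mul_I (fderiv_fderiv_comm hu w), cross_apply_mul_I,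
    ← lap_eq_fderiv_fderiv hu, h w, smul_comm]
  rfl

theorem SolvesHSystem.fderiv_fderiv_fderiv_add_mul_I (h : SolvesHSystem u)
    (hu : ContDiff ℝ 3 u) (w c a b : ℂ) :
    fderiv ℝ (fderiv ℝ (fderiv ℝ u)) w c a b +
        fderiv ℝ (fderiv ℝ (fderiv ℝ u)) w c (I * a) (I * b) =
      (2 : ℝ) • (cross (fderiv ℝ u w a) (fderiv ℝ (fderiv ℝ u) w c (I * b)) +
        cross (fderiv ℝ (fderiv ℝ u) w c a) (fderiv ℝ u w (I * b))) := by
  have hu₂ : ContDiff ℝ 2 u := hu.of_le (by norm_num)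
  have hD : HasFDerivAt (fderiv ℝ u) (fderiv ℝ (fderiv ℝ u) w) w :=
    (differentiable_fderiv hu₂ w).hasFDerivAt
  have hD₂ : HasFDerivAt (fderiv ℝ (fderiv ℝ u)) (fderiv ℝ (fderiv ℝ (fderiv ℝ u)) w) w :=
    (differentiable_fderiv (hu.fderiv_right le_rfl) w).hasFDerivAt
  have happly (x y : ℂ) := (hD₂.clm_apply (hasFDerivAt_const x w)).clm_apply (hasFDerivAt_const y w)
  have hcross := (crossL.hasFDerivAt_of_bilinear (hD.clm_apply (hasFDerivAt_const a w))
    (hD.clm_apply (hasFDerivAt_const (I * b) w))).const_smul (2 : ℝ)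
  have heq := (((happly a b).add (happly (I * a) (I * b))).congr_of_eventuallyEq
    (.of_forall fun z => (h.fderiv_fderiv_add_mul_I hu₂ z a b).symm)).unique hcross
  simpa [crossL_apply] using congr($heq c)

theorem differentiable_comp_apply_entire {T : ℂ → ℂ →L[ℝ] F} (hT : Differentiable ℝ T)
    (hf : Differentiable ℂ f) (hg : Differentiable ℂ g) :
    Differentiable ℝ fun w => T (f w) (g w) :=
  (hT.comp (hf.restrictScalars ℝ)).clm_apply (hg.restrictScalars ℝ)

theorem fderiv_comp_apply_entire {T : ℂ → ℂ →L[ℝ] F} (hT : Differentiable ℝ T)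
    (hf : Differentiable ℂ f) (hg : Differentiable ℂ g) (z h : ℂ) :
    fderiv ℝ (fun w => T (f w) (g w)) z h =
      fderiv ℝ T (f z) (h * deriv f z) (g z) + T (f z) (h * deriv g z) := by
  have hTf := (hT (f z)).hasFDerivAt.comp z (hf z).hasDerivAt.complexToReal_fderiv
  have := (hTf.clm_apply (hg z).hasDerivAt.complexToReal_fderiv).fderiv
  simpa [mul_comm, add_comm] using congr($this h)

theorem fderiv_comp_apply_apply_entire {T : ℂ → ℂ →L[ℝ] ℂ →L[ℝ] F} (hT : Differentiable ℝ T)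
    (hf : Differentiable ℂ f) (hg : Differentiable ℂ g) (hk : Differentiable ℂ k) (z h : ℂ) :
    fderiv ℝ (fun w => T (f w) (g w) (k w)) z h =
      fderiv ℝ T (f z) (h * deriv f z) (g z) (k z) + T (f z) (h * deriv g z) (k z) +
        T (f z) (g z) (h * deriv k z) := by
  have := fderiv_comp_apply_entire (differentiable_comp_apply_entire hT hf hg)
    differentiable_id hk z h
  simpa [fderiv_comp_apply_entire hT hf hg] using this

theorem fderiv_comp_entire (hP : Differentiable ℝ P) (hf : Differentiable ℂ f) (z h : ℂ) :
    fderiv ℝ (P ∘ f) z h = fderiv ℝ P (f z) (h * deriv f z) := by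
  have := ((hP (f z)).hasFDerivAt.comp z (hf z).hasDerivAt.complexToReal_fderiv).fderiv
  simpa [mul_comm] using congr($this h)

theorem fderiv_variation (hP : ContDiff ℝ 2 P) (hf : Differentiable ℂ f)
    (hg : Differentiable ℂ g) (z h : ℂ) :
    fderiv ℝ (variation P f g) z h =
      fderiv ℝ (fderiv ℝ P) (f z) (g z) (h * deriv f z) + fderiv ℝ P (f z) (h * deriv g z) := by
  rw [fderiv_fderiv_comm hP]
  exact fderiv_comp_apply_entire (differentiable_fderiv hP) hf hg z h

theorem fderiv_fderiv_variation (hP : ContDiff ℝ 3 P) (hf : Differentiable ℂ f)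
    (hg : Differentiable ℂ g) (z h : ℂ) :
    fderiv ℝ (fun w => fderiv ℝ (variation P f g) w h) z h =
      fderiv ℝ (fderiv ℝ (fderiv ℝ P)) (f z) (g z) (h * deriv f z) (h * deriv f z) +
      (2 : ℝ) • fderiv ℝ (fderiv ℝ P) (f z) (h * deriv f z) (h * deriv g z) +
      (fderiv ℝ (fderiv ℝ P) (f z) (g z) (h ^ 2 * deriv (deriv f) z) +
        fderiv ℝ P (f z) (h ^ 2 * deriv (deriv g) z)) := by
  have hP₂ : ContDiff ℝ 2 P := hP.of_le (by norm_num)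
  have hDP : ContDiff ℝ 2 (fderiv ℝ P) := hP.fderiv_right le_rfl
  have hD : Differentiable ℝ (fderiv ℝ P) := differentiable_fderiv hP₂
  have hD₂ : Differentiable ℝ (fderiv ℝ (fderiv ℝ P)) := differentiable_fderiv hDP
  have hf' : Differentiable ℂ fun w => h * deriv f w := hf.deriv.const_mul h
  have hg' : Differentiable ℂ fun w => h * deriv g w := hg.deriv.const_mul h
  have hD₂fg : Differentiable ℝ fun w => fderiv ℝ (fderiv ℝ P) (f w) (g w) (h * deriv f w) :=
    (differentiable_comp_apply_entire hD₂ hf hg).clm_apply (hf'.restrictScalars ℝ)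
  simp only [fderiv_variation hP₂ hf hg]
  rw [fderiv_fun_add (hD₂fg z) (differentiable_comp_apply_entire hD hf hg' z), add_apply,
    fderiv_comp_apply_apply_entire hD₂ hf hg hf', fderiv_comp_apply_entire hD hf hg',
    deriv_const_mul _ (hf.deriv z), deriv_const_mul _ (hg.deriv z),
    fderiv_fderiv_comm hDP, fderiv_fderiv_comm hP₂ _ (h * deriv g z),
    sq, mul_assoc, mul_assoc]
  module

theorem linearizedHSystem_comp_variation (h : SolvesHSystem u) (hu : ContDiff ℝ 3 u)
    (hf : Differentiable ℂ f) (hg : Differentiable ℂ g) (z : ℂ) :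
    linearizedHSystem (u ∘ f) (variation u f g) z = 0 := by
  have hu₂ : ContDiff ℝ 2 u := hu.of_le (by norm_num)
  have hlap : lap (variation u f g) z = _ :=
    congr($(fderiv_fderiv_variation hu hf hg z 1) + $(fderiv_fderiv_variation hu hf hg z I))
  have hsymm : cross (fderiv ℝ u (f z) (deriv g z)) (fderiv ℝ u (f z) (I * deriv f z)) =
      cross (fderiv ℝ u (f z) (deriv f z)) (fderiv ℝ u (f z) (I * deriv g z)) := by
    rw [cross_apply_mul_I, cross_apply_mul_I, real_inner_comm]
  have hthird := h.fderiv_fderiv_fderiv_add_mul_I hu (f z) (g z) (deriv f z) (deriv f z)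
  have hsecond := h.fderiv_fderiv_add_mul_I hu₂ (f z) (deriv f z) (deriv g z)
  simp only [linearizedHSystem, hlap, pdx, pdy, fderiv_variation hu₂ hf hg,
    fderiv_comp_entire (hu.differentiable three_ne_zero) hf]
  simp only [one_mul, one_pow, I_sq, neg_mul, map_neg, ← crossL_apply, map_add, add_apply]
    at hthird hsecond hsymm ⊢
  linear_combination (norm := module) hthird + (2 : ℝ) • hsecond - (2 : ℝ) • hsymm

end Variation

/-! ### Inverse stereographic projection -/

/-- The embedding `ℂ ≅ ℝ² × {0} ⊆ ℝ³`. -/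
def planeInclusion : ℂ →L[ℝ] R3 :=
  LinearMap.toContinuousLinearMap
    { toFun := fun w => e3 w.re w.im 0
      map_add' := fun a b => by ext i; fin_cases i <;> simp [e3]
      map_smul' := fun r a => by ext i; fin_cases i <;> simp [e3] }

theorem planeInclusion_apply (w : ℂ) : planeInclusion w = e3 w.re w.im 0 := rfl

/-- Inverse stereographic projection `π : ℂ → S²` from the north pole `N`, written as the inversion
`w ↦ N + 2 (w - N) / ‖w - N‖²`, where `‖w - N‖² = 1 + ‖w‖²`. -/
def invStereo (w : ℂ) : R3 :=
  e3 0 0 1 + (2 * (1 + ‖w‖ ^ 2)⁻¹) • (planeInclusion w - e3 0 0 1)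

theorem one_add_norm_sq_ne_zero (w : ℂ) : 1 + ‖w‖ ^ 2 ≠ 0 := by positivity

theorem contDiff_invStereo {n : WithTop ℕ∞} : ContDiff ℝ n invStereo := by
  have hne := one_add_norm_sq_ne_zero
  have hnorm : ContDiff ℝ n fun w : ℂ => ‖w‖ ^ 2 := contDiff_norm_sq ℝ
  unfold invStereo
  fun_prop (disch := assumption)

theorem hasFDerivAt_inv_one_add_norm_sq (w : ℂ) :
    HasFDerivAt (fun z : ℂ => (1 + ‖z‖ ^ 2)⁻¹)
      ((-(2 * ((1 + ‖w‖ ^ 2)⁻¹) ^ 2)) • innerSL ℝ w) w := by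
  have hnorm := ((hasFDerivAt_id (𝕜 := ℝ) w).norm_sq).const_add 1
  refine ((hasDerivAt_inv (one_add_norm_sq_ne_zero w)).comp_hasFDerivAt w hnorm).congr_fderiv ?_
  ext h
  simp only [ContinuousLinearMap.comp_id, id_eq, smul_apply, nsmul_eq_mul, Nat.cast_ofNat,
    smul_eq_mul, inv_pow]
  ring

theorem fderiv_invStereo (w h : ℂ) :
    fderiv ℝ invStereo w h = (2 * (1 + ‖w‖ ^ 2)⁻¹) • planeInclusion h -
      (4 * ((1 + ‖w‖ ^ 2)⁻¹) ^ 2 * inner ℝ w h) • (planeInclusion w - e3 0 0 1) := by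
  have := ((((hasFDerivAt_inv_one_add_norm_sq w).const_mul 2).smul
    (planeInclusion.hasFDerivAt.sub_const (e3 0 0 1))).const_add (e3 0 0 1)).fderiv
  rw [show fderiv ℝ invStereo w = _ from this]
  simp only [add_apply, smul_apply, ContinuousLinearMap.smulRight_apply, smul_eq_mul,
    coe_innerSL_apply]
  module

theorem fderiv_fderiv_invStereo (w h : ℂ) :
    fderiv ℝ (fun z => fderiv ℝ invStereo z h) w h =
      (16 * ((1 + ‖w‖ ^ 2)⁻¹) ^ 3 * inner ℝ w h ^ 2 - 4 * ((1 + ‖w‖ ^ 2)⁻¹) ^ 2 * ‖h‖ ^ 2) •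
          (planeInclusion w - e3 0 0 1) -
        (8 * ((1 + ‖w‖ ^ 2)⁻¹) ^ 2 * inner ℝ w h) • planeInclusion h := by
  have hρ := hasFDerivAt_inv_one_add_norm_sq w
  have hinner := (hasFDerivAt_id (𝕜 := ℝ) w).inner ℝ (hasFDerivAt_const h w)
  have hsum := ((hρ.const_mul 2).smul_const (planeInclusion h)).sub
    ((((hρ.pow 2).const_mul 4).mul hinner).smul
      (planeInclusion.hasFDerivAt.sub_const (e3 0 0 1)))
  have hfderiv : fderiv ℝ (fun z => fderiv ℝ invStereo z h) w = _ :=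
    (hsum.congr_of_eventuallyEq (.of_forall fun z => fderiv_invStereo z h)).fderiv
  rw [hfderiv]
  simp only [sub_apply, add_apply, smul_apply, smul_eq_mul, nsmul_eq_mul, Pi.mul_apply,
    ContinuousLinearMap.smulRight_apply, ContinuousLinearMap.comp_apply,
    ContinuousLinearMap.prod_apply, ContinuousLinearMap.id_apply, zero_apply, coe_innerSL_apply,
    fderivInnerCLM_apply, inner_zero_right, real_inner_self_eq_norm_sq, id_eq, pow_one,
    Nat.add_one_sub_one, Nat.cast_ofNat, zero_add]
  module

theorem norm_fderiv_invStereo (w h : ℂ) :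
    ‖fderiv ℝ invStereo w h‖ = 2 * (1 + ‖w‖ ^ 2)⁻¹ * ‖h‖ := by
  rw [← sq_eq_sq₀ (norm_nonneg _) (by positivity), fderiv_invStereo, EuclideanSpace.norm_sq_eq,
    Fin.sum_univ_three]
  simp only [Real.norm_eq_abs, sq_abs]
  have hne := one_add_norm_sq_ne_zero w
  simp only [mul_pow, ← normSq_eq_norm_sq, normSq_apply, planeInclusion_apply, e3, Complex.inner]
    at hne ⊢
  simp only [WithLp.equiv_symm_apply, PiLp.sub_apply, PiLp.smul_apply, smul_eq_mul,
    Matrix.cons_val_zero, Matrix.cons_val_one, Matrix.cons_val, mul_re, conj_re, conj_im]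
  field_simp
  ring

theorem solvesHSystem_invStereo : SolvesHSystem invStereo := by
  intro w
  have hne := one_add_norm_sq_ne_zero w
  have hlap : lap invStereo w = _ :=
    congr($(fderiv_fderiv_invStereo w 1) + $(fderiv_fderiv_invStereo w I))
  rw [hlap]
  simp only [pdx, pdy, fderiv_invStereo, ← normSq_eq_norm_sq, normSq_apply] at hne ⊢
  ext i
  fin_cases i <;>
  · simp [planeInclusion_apply, e3, cross, Complex.inner]
    field_simp
    ring

/-! ### The degree-two bubble -/

theorem norm_sq_sq_eq_re_im (z : ℂ) : ‖z ^ 2‖ ^ 2 = (z.re ^ 2 + z.im ^ 2) ^ 2 := by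
  rw [← normSq_eq_norm_sq, map_pow, normSq_apply, sq z.re, sq z.im]

theorem W_eq_invStereo_comp_sq : W = invStereo ∘ fun z => z ^ 2 := by
  funext z
  have hD : (z.re ^ 2 + z.im ^ 2) ^ 2 + 1 ≠ 0 := by positivity
  simp only [W, Function.comp_apply, invStereo, norm_sq_sq_eq_re_im, planeInclusion_apply]
  ext i
  fin_cases i <;>
  · simp [e3, sq z]
    field_simp
    ring

theorem LW_eq_linearizedHSystem : LW = linearizedHSystem W := rfl

theorem exists_norm_eval_le {p : ℂ[X]} {n : ℕ} (hp : p.natDegree ≤ n) :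
    ∃ C, ∀ z, ‖p.eval z‖ ≤ C * (1 + ‖z‖ ^ n) := by
  refine ⟨∑ i ∈ Finset.range (n + 1), ‖p.coeff i‖, fun z => ?_⟩
  have hpow {i : ℕ} (hi : i ≤ n) : ‖z‖ ^ i ≤ 1 + ‖z‖ ^ n := by
    rcases le_total ‖z‖ 1 with h | h
    · exact (pow_le_one₀ (norm_nonneg z) h).trans (le_add_of_nonneg_right (by positivity))
    · exact (pow_le_pow_right₀ h hi).trans (le_add_of_nonneg_left zero_le_one)
  rw [eval_eq_sum_range' (Nat.lt_succ_of_le hp), Finset.sum_mul]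
  refine norm_sum_le_of_le _ fun i hi => ?_
  rw [norm_mul, norm_pow]
  gcongr
  exact hpow (Finset.mem_range_succ_iff.mp hi)

theorem exists_norm_variation_invStereo_pow_le {p : ℂ[X]} {n : ℕ} (hp : p.natDegree ≤ 2 * n) :
    ∃ C, ∀ z, ‖variation invStereo (· ^ n) (p.eval ·) z‖ ≤ C := by
  obtain ⟨C, hC⟩ := exists_norm_eval_le hp
  refine ⟨2 * C, fun z => ?_⟩
  rw [variation, norm_fderiv_invStereo, norm_pow, ← pow_mul', mul_assoc, inv_mul_eq_div]
  gcongr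
  exact (div_le_iff₀ (by positivity)).2 (hC z)

/-- The variation `d/dt π(z² + t p(z))` at `t = 0` of the bubble `W = π(z²)`, where `π` is
`invStereo`. -/
def bubbleVariation (p : ℂ[X]) : ℂ → R3 :=
  variation invStereo (· ^ 2) (p.eval ·)

theorem isBoundedSmoothKernel_bubbleVariation {p : ℂ[X]} (hp : p.natDegree ≤ 4) :
    IsBoundedSmoothKernel (bubbleVariation p) := by
  refine ⟨exists_norm_variation_invStereo_pow_le hp, ?_, fun z => ?_⟩
  · have hp : ContDiff ℝ (⊤ : ℕ∞) (p.eval ·) := p.differentiable.contDiff.restrict_scalars ℝ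
    have hD : ContDiff ℝ (⊤ : ℕ∞) (fderiv ℝ invStereo) := contDiff_invStereo.fderiv_right le_rfl
    unfold bubbleVariation variation
    fun_prop
  · rw [LW_eq_linearizedHSystem, W_eq_invStereo_comp_sq]
    exact linearizedHSystem_comp_variation solvesHSystem_invStereo contDiff_invStereo
      (by fun_prop) p.differentiable z

theorem bubbleVariation_apply (p : ℂ[X]) (z : ℂ) :
    bubbleVariation p z =
      let x := z.re; let y := z.im; let D := (x ^ 2 + y ^ 2) ^ 2 + 1
      let q := p.eval z
      let s := (x ^ 2 - y ^ 2) * q.re + 2 * x * y * q.im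
      e3 ((2 * q.re * D - 4 * (x ^ 2 - y ^ 2) * s) / D ^ 2)
        ((2 * q.im * D - 8 * x * y * s) / D ^ 2) (4 * s / D ^ 2) := by
  have hD : (z.re ^ 2 + z.im ^ 2) ^ 2 + 1 ≠ 0 := by positivity
  simp only [bubbleVariation, variation, fderiv_invStereo, norm_sq_sq_eq_re_im,
    planeInclusion_apply, Complex.inner]
  ext i
  fin_cases i <;>
  · simp [e3, sq z]
    field_simp
    ring

theorem Z01_eq_bubbleVariation : Z01 = bubbleVariation (C (-2) * X ^ 2) := by
  funext z
  rw [bubbleVariation_apply, Z01]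
  have hD : (z.re ^ 2 + z.im ^ 2) ^ 2 + 1 ≠ 0 := by positivity
  congr 1 <;> simp [sq z] <;> field_simp <;> ring

theorem Z02_eq_bubbleVariation : Z02 = bubbleVariation (C I * X ^ 2) := by
  funext z
  rw [bubbleVariation_apply, Z02]
  have hD : (z.re ^ 2 + z.im ^ 2) ^ 2 + 1 ≠ 0 := by positivity
  congr 1 <;> simp [sq z] <;> field_simp <;> ring

theorem Z11_eq_bubbleVariation : Z11 = bubbleVariation (C (-2) * X) := by
  funext z
  rw [bubbleVariation_apply, Z11]
  have hD : (z.re ^ 2 + z.im ^ 2) ^ 2 + 1 ≠ 0 := by positivity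
  congr 1 <;> simp <;> field_simp <;> ring

theorem Z12_eq_bubbleVariation : Z12 = bubbleVariation (C (-2 * I) * X) := by
  funext z
  rw [bubbleVariation_apply, Z12]
  have hD : (z.re ^ 2 + z.im ^ 2) ^ 2 + 1 ≠ 0 := by positivity
  congr 1 <;> simp <;> field_simp <;> ring

theorem Z21_eq_bubbleVariation : Z21 = bubbleVariation 1 := by
  funext z
  rw [bubbleVariation_apply, Z21]
  have hD : (z.re ^ 2 + z.im ^ 2) ^ 2 + 1 ≠ 0 := by positivity
  congr 1 <;> simp <;> field_simp <;> ring

theorem Z22_eq_bubbleVariation : Z22 = bubbleVariation (C I) := by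
  funext z
  rw [bubbleVariation_apply, Z22]
  have hD : (z.re ^ 2 + z.im ^ 2) ^ 2 + 1 ≠ 0 := by positivity
  congr 1 <;> simp <;> field_simp <;> ring

theorem Zm11_eq_bubbleVariation : Zm11 = bubbleVariation (C 2 * X ^ 3) := by
  funext z
  rw [bubbleVariation_apply, Zm11]
  have hD : (z.re ^ 2 + z.im ^ 2) ^ 2 + 1 ≠ 0 := by positivity
  congr 1 <;> simp [pow_succ z] <;> field_simp <;> ring

theorem Zm12_eq_bubbleVariation : Zm12 = bubbleVariation (C (-2 * I) * X ^ 3) := by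
  funext z
  rw [bubbleVariation_apply, Zm12]
  have hD : (z.re ^ 2 + z.im ^ 2) ^ 2 + 1 ≠ 0 := by positivity
  congr 1 <;> simp [pow_succ z] <;> field_simp <;> ring

theorem Zm21_eq_bubbleVariation : Zm21 = bubbleVariation (C (I / 2) * (1 - X ^ 4)) := by
  funext z
  rw [bubbleVariation_apply, Zm21]
  have hD : (z.re ^ 2 + z.im ^ 2) ^ 2 + 1 ≠ 0 := by positivity
  congr 1 <;> simp [pow_succ z] <;> field_simp <;> ring

theorem Zm22_eq_bubbleVariation : Zm22 = bubbleVariation (C (1 / 2) * (1 + X ^ 4)) := by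
  funext z
  rw [bubbleVariation_apply, Zm22]
  have hD : (z.re ^ 2 + z.im ^ 2) ^ 2 + 1 ≠ 0 := by positivity
  congr 1 <;> simp [pow_succ z] <;> field_simp <;> ring

/-- Each of the ten maps `Z_{k,j}` is a bounded smooth solution of the linearized
H-system `L_W[Z] = 0` at the degree-2 bubble `W`. -/
theorem Z_kernels_bounded_smooth :
    IsBoundedSmoothKernel Z01 ∧ IsBoundedSmoothKernel Z02 ∧
    IsBoundedSmoothKernel Z11 ∧ IsBoundedSmoothKernel Z12 ∧
    IsBoundedSmoothKernel Z21 ∧ IsBoundedSmoothKernel Z22 ∧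
    IsBoundedSmoothKernel Zm11 ∧ IsBoundedSmoothKernel Zm12 ∧
    IsBoundedSmoothKernel Zm21 ∧ IsBoundedSmoothKernel Zm22 := by
  rw [Z01_eq_bubbleVariation, Z02_eq_bubbleVariation, Z11_eq_bubbleVariation,
    Z12_eq_bubbleVariation, Z21_eq_bubbleVariation, Z22_eq_bubbleVariation,
    Zm11_eq_bubbleVariation, Zm12_eq_bubbleVariation, Zm21_eq_bubbleVariation,
    Zm22_eq_bubbleVariation]
  refine ⟨?_, ?_, ?_, ?_, ?_, ?_, ?_, ?_, ?_, ?_⟩ <;>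
    exact isBoundedSmoothKernel_bubbleVariation (by compute_degree!)
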